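/- arXiv:1201.2384 — 2 statements merged into one kernel-verified Lean document; each statement's English description precedes it below -/
import Mathlib

section
/- (Main theorem.) Let φ be a continuous incentive function such that x_{iα} + φ_{iα}(x) ≥ 0 for every x ∈ Δ, every player i, and every strategy α. Then there exists an incentive equilibrium x̂ ∈ Δ, i.e., a point satisfying φ_{iα}(x̂) = x̂_{iα} · Σ_β φ_{iβ}(x̂) for every player i and every strategy α. -/
open Finset

/-- Mixed strategy profile space `Δ`: player `i` has `s i + 1` pure strategies
(so every player has at least one strategy). -/
def Δset {n : ℕ} (s : Fin n → ℕ) : Set (∀ i, Fin (s i + 1) → ℝ) :=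
  {x | (∀ i α, 0 ≤ x i α) ∧ ∀ i, ∑ α, x i α = 1}

/-- The `α`-th standard unit vector of `ℝ^{m+1}` (pure strategy `α`). -/
def pureVec {m : ℕ} (α : Fin (m + 1)) : Fin (m + 1) → ℝ :=
  fun β => if β = α then 1 else 0

/-- Multilinear extension of a payoff function defined on pure profiles. -/
noncomputable def mulExt {n : ℕ} {s : Fin n → ℕ} (u : (∀ j, Fin (s j + 1)) → ℝ)
    (x : ∀ i, Fin (s i + 1) → ℝ) : ℝ :=
  ∑ p : ∀ j, Fin (s j + 1), (∏ j, x j (p j)) * u p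

/-- The updating map `T(x)_i = (x_i + Σ_α φ_{iα}(x) e_{iα}) / (1 + Σ_β φ_{iβ}(x))`. -/
noncomputable def Tmap {n : ℕ} {s : Fin n → ℕ}
    (φ : (∀ i, Fin (s i + 1) → ℝ) → ∀ i, Fin (s i + 1) → ℝ)
    (x : ∀ i, Fin (s i + 1) → ℝ) : ∀ i, Fin (s i + 1) → ℝ :=
  fun i α => (x i α + φ x i α) / (1 + ∑ β, φ x i β)

/-- `φ` is an incentive function. -/
def IsInc {n : ℕ} {s : Fin n → ℕ}
    (φ : (∀ i, Fin (s i + 1) → ℝ) → ∀ i, Fin (s i + 1) → ℝ) : Prop :=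
  (∀ x i α, x i α = 0 → 0 ≤ φ x i α) ∧ ∀ x i, (∑ β, φ x i β) ≠ -1

/-- `x` is an incentive equilibrium for `φ`. -/
def IncEq {n : ℕ} {s : Fin n → ℕ}
    (φ : (∀ i, Fin (s i + 1) → ℝ) → ∀ i, Fin (s i + 1) → ℝ)
    (x : ∀ i, Fin (s i + 1) → ℝ) : Prop :=
  ∀ i α, φ x i α = x i α * ∑ β, φ x i β

/-- `x` is a Nash equilibrium: each player's payoff is the maximum over pure deviations. -/
def NashEq {n : ℕ} {s : Fin n → ℕ} (u : Fin n → (∀ j, Fin (s j + 1)) → ℝ)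
    (x : ∀ i, Fin (s i + 1) → ℝ) : Prop :=
  ∀ i, mulExt (u i) x =
    Finset.univ.sup' Finset.univ_nonempty
      (fun α => mulExt (u i) (Function.update x i (pureVec α)))



/-- `R` is dominant for the orders `v`. -/
def ScDom {X I : Type} (v : I → X → ℕ) (R : Finset X) : Prop :=
  ∀ y, ∃ i, ∀ x ∈ R, v i y ≤ v i x

lemma ScDom.mono {X I : Type} {v : I → X → ℕ} {R D : Finset X} (h : ScDom v R) (hD : D ⊆ R) :
    ScDom v D := fun y => by
  obtain ⟨i, hi⟩ := h y
  exact ⟨i, fun x hx => hi x (hD hx)⟩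

lemma exists_insert_of_card {X : Type} [DecidableEq X] {D R : Finset X} (h : D ⊆ R)
    (hc : D.card + 1 = R.card) : ∃ y, y ∉ D ∧ R = insert y D := by
  have h1 : (R \ D).card = 1 := by rw [card_sdiff_of_subset h]; omega
  obtain ⟨y, hy⟩ := card_eq_one.mp h1
  have hy' : y ∈ R \ D := by rw [hy]; simp
  refine ⟨y, (mem_sdiff.mp hy').2, ?_⟩
  rw [← sdiff_union_of_subset h, hy]; rfl

section
variable {X I : Type} [Fintype X] [DecidableEq X] [Fintype I] [DecidableEq I]

/-- Sperner step on the room side. -/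
lemma room_even (c : X → I) (i0 : I) (R : Finset X) (hR : R.card = Fintype.card I)
    (hnc : R.image c ≠ univ) (F : Finset (Finset X))
    (hF : ∀ D, D ∈ F ↔ D.card + 1 = Fintype.card I ∧ D.image c = univ.erase i0) :
    Even (#{D ∈ F | D ⊆ R}) := by
  rcases ({D ∈ F | D ⊆ R} : Finset (Finset X)).eq_empty_or_nonempty with h | ⟨D, hD⟩
  · simp [h]
  rw [mem_filter, hF] at hD
  obtain ⟨⟨hDc, hDi⟩, hDR⟩ := hD
  obtain ⟨x, hx, rfl⟩ := exists_insert_of_card hDR (by omega)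
  have hinj : Set.InjOn c D := by
    apply card_image_iff.mp
    rw [hDi, card_erase_of_mem (mem_univ _), card_univ]; omega
  have hcx : c x ≠ i0 := by
    intro h
    apply hnc
    rw [image_insert, hDi, h]; simp
  have : c x ∈ D.image c := by rw [hDi]; simp [hcx]
  obtain ⟨x', hx', hxx⟩ := mem_image.mp this
  have hne : x' ≠ x := fun h => hx (h ▸ hx')
  have key : ({D' ∈ F | D' ⊆ insert x D} : Finset (Finset X)) =
      {D, (insert x D).erase x'} := by
    ext D'
    simp only [mem_filter, hF, mem_insert, mem_singleton]
    constructor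
    · rintro ⟨⟨h1, h2⟩, h3⟩
      obtain ⟨z, hz, hzR⟩ := exists_insert_of_card h3 (by omega)
      have hzD : z ∈ insert x D := by rw [hzR]; simp
      have hD' : D' = (insert x D).erase z := by rw [hzR, erase_insert hz]
      rcases mem_insert.mp hzD with rfl | hzD2
      · left; rw [hD', erase_insert hx]
      · right
        have : c z ∈ D'.image c := by
          rw [h2, ← hDi]; exact mem_image_of_mem _ hzD2
        obtain ⟨w, hw, hwz⟩ := mem_image.mp this
        have hwR := h3 hw
        rcases mem_insert.mp hwR with rfl | hwD
        · have : z = x' := hinj hzD2 hx' (by rw [hxx, hwz])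
          rw [hD', this]
        · exact absurd (hinj hwD hzD2 hwz ▸ hw) hz
    · rintro (rfl | rfl)
      · exact ⟨⟨hDc, hDi⟩, hDR⟩
      · refine ⟨⟨?_, ?_⟩, erase_subset _ _⟩
        · rw [card_erase_of_mem (mem_insert_of_mem hx'), card_insert_of_notMem hx]; omega
        · rw [← hDi]
          ext k
          simp only [mem_image, mem_erase, mem_insert]
          constructor
          · rintro ⟨w, ⟨hw1, rfl | hw2⟩, rfl⟩
            · exact ⟨x', hx', hxx⟩
            · exact ⟨w, hw2, rfl⟩
          · rintro ⟨w, hw, rfl⟩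
            by_cases hwx : w = x'
            · exact ⟨x, ⟨hne.symm, Or.inl rfl⟩, by rw [hwx, hxx]⟩
            · exact ⟨w, ⟨hwx, Or.inr hw⟩, rfl⟩
  rw [key, card_pair]
  · exact ⟨1, rfl⟩
  · intro h
    rw [h] at hx'
    simp at hx'

/-- An inner door lies in zero or two rooms. -/
lemma door_even (v : I → X → ℕ) (hv : ∀ i, Function.Injective (v i)) (s : I → X)
    (D : Finset X) (hDc : D.card + 1 = Fintype.card I)
    (hs : ∀ i j, j ≠ i → ∃ t ∈ D, v i t < v i (s j)) (hDne : D.Nonempty)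
    (F : Finset (Finset X))
    (hF : ∀ R, R ∈ F ↔ R.card = Fintype.card I ∧ ScDom v R) :
    Even (#{R ∈ F | D ⊆ R}) := by
  by_cases hdom : ScDom v D
  swap
  · rw [filter_eq_empty_iff.mpr]
    · simp
    · intro R hR h
      exact hdom (((hF R).mp hR).2.mono h)
  have hm : ∀ j, ∃ m ∈ D, ∀ x ∈ D, v j m ≤ v j x := fun j => exists_min_image D (v j) hDne
  choose m hmD hmin using hm
  have hsurj : ∀ x ∈ D, ∃ j, m j = x := by
    intro x hx
    obtain ⟨j, hj⟩ := hdom x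
    exact ⟨j, hv j (le_antisymm (hmin j x hx) (hj _ (hmD j)))⟩
  obtain ⟨a, -, b, -, hab, hmab⟩ := exists_ne_map_eq_of_card_lt_of_maps_to
    (s := (univ : Finset I)) (t := D) (by rw [card_univ]; omega) (f := m) (fun j _ => hmD j)
  have hE : ∀ i, ∃ y, (∀ j, j ≠ i → v j (m j) < v j y) ∧
      ∀ z, (∀ j, j ≠ i → v j (m j) < v j z) → v i z ≤ v i y := by
    intro i
    have hne : ({y | ∀ j, j ≠ i → v j (m j) < v j y} : Finset X).Nonempty := by
      refine ⟨s i, ?_⟩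
      simp only [mem_filter, mem_univ, true_and]
      intro j hj
      obtain ⟨t, ht, htl⟩ := hs j i hj.symm
      exact (hmin j t ht).trans_lt htl
    obtain ⟨y, hy, hmax⟩ := exists_max_image _ (v i) hne
    simp only [mem_filter, mem_univ, true_and] at hy hmax
    exact ⟨y, hy, hmax⟩
  choose Y hY hYmax using hE
  have hYD : ∀ i, i = a ∨ i = b → Y i ∉ D := by
    intro i hi hyD
    obtain ⟨j, hj⟩ := hsurj _ hyD
    have : ∃ k, k ≠ i ∧ m k = Y i := by
      by_cases hji : j = i
      · subst hji
        rcases hi with rfl | rfl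
        · exact ⟨b, hab.symm, by rw [← hmab, hj]⟩
        · exact ⟨a, hab, by rw [hmab, hj]⟩
      · exact ⟨j, hji, hj⟩
    obtain ⟨k, hk, hmk⟩ := this
    have := hY i k hk
    rw [hmk] at this
    exact lt_irrefl _ this
  have hYdom : ∀ i, ScDom v (insert (Y i) D) := by
    intro i z
    by_contra hcon
    push Not at hcon
    have hz : ∀ j, j ≠ i → v j (m j) < v j z := by
      intro j hj
      obtain ⟨x, hx, hxz⟩ := hcon j
      rcases mem_insert.mp hx with rfl | hx
      · exact (hY i j hj).trans hxz
      · exact (hmin j x hx).trans_lt hxz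
    have hzi := hYmax i z hz
    have hzi' : v i (m i) < v i z := by
      obtain ⟨x, hx, hxz⟩ := hcon i
      rcases mem_insert.mp hx with rfl | hx
      · omega
      · exact (hmin i x hx).trans_lt hxz
    obtain ⟨j, hj⟩ := hdom z
    have h1 := hj _ (hmD j)
    by_cases hji : j = i
    · subst hji; omega
    · have := hz j hji; omega
  have hYab : Y a ≠ Y b := by
    intro h
    obtain ⟨j, hj⟩ := hdom (Y a)
    have h1 := hj _ (hmD j)
    by_cases hja : j = a
    · have := hY b j (by rw [hja]; exact hab)
      rw [h] at h1; omega
    · have := hY a j hja; omega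
  have key : ({R ∈ F | D ⊆ R} : Finset (Finset X)) = {insert (Y a) D, insert (Y b) D} := by
    ext R
    simp only [mem_filter, hF, mem_insert, mem_singleton]
    constructor
    · rintro ⟨⟨hRc, hRd⟩, hDR⟩
      obtain ⟨y, hy, rfl⟩ := exists_insert_of_card hDR (by omega)
      obtain ⟨i, hi⟩ := hRd y
      have hyi : v i y < v i (m i) := by
        refine lt_of_le_of_ne (hi _ (mem_insert_of_mem (hmD i))) fun h => ?_
        exact hy (hv i h ▸ hmD i)
      have hs' : ∀ w ∈ D, ∃ j, m j = w ∧ v j w ≤ v j y := by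
        intro w hw
        obtain ⟨j, hj⟩ := hRd w
        exact ⟨j, hv j (le_antisymm (hmin j w hw) (hj _ (mem_insert_of_mem (hmD j)))),
          hj _ (mem_insert_self _ _)⟩
      have hsub : D ⊆ ({j | v j (m j) ≤ v j y} : Finset I).image m := by
        intro w hw
        obtain ⟨j, hj, hj'⟩ := hs' w hw
        refine mem_image.mpr ⟨j, ?_, hj⟩
        simp [hj, hj']
      have hJ : ∀ j, j ≠ i → v j (m j) ≤ v j y := by
        intro j hj
        by_contra hcon
        have : ({j | v j (m j) ≤ v j y} : Finset I) ⊆ (univ.erase i).erase j := by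
          intro k hk
          simp only [mem_filter, mem_univ, true_and] at hk
          simp only [mem_erase, mem_univ, and_true]
          constructor
          · rintro rfl; exact hcon hk
          · rintro rfl; omega
        have h1 := (card_le_card hsub).trans (card_image_le.trans (card_le_card this))
        rw [card_erase_of_mem (by simp [hj]), card_erase_of_mem (mem_univ _), card_univ] at h1
        have : 0 < D.card := hDne.card_pos
        omega
      have hiab : i = a ∨ i = b := by
        by_contra hcon
        push Not at hcon
        have : D ⊆ ((univ.erase i).erase a).image m := by
          intro w hw
          obtain ⟨j, hj, hj'⟩ := hs' w hw
          have hji : j ≠ i := by rintro rfl; rw [hj] at hyi; omega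
          rw [mem_image]
          by_cases hja : j = a
          · refine ⟨b, ?_, by rw [← hmab, ← hja, hj]⟩
            simp [hab.symm, hcon.2.symm]
          · exact ⟨j, by simp [hja, hji], hj⟩
        have h1 := (card_le_card this).trans card_image_le
        rw [card_erase_of_mem (by simp [hcon.1.symm]), card_erase_of_mem (mem_univ _),
          card_univ] at h1
        have : 0 < D.card := hDne.card_pos
        omega
      have hyY : y = Y i := by
        apply hv i
        apply le_antisymm
        · apply hYmax
          intro j hj
          refine lt_of_le_of_ne (hJ j hj) fun h => ?_
          exact hy (hv j h ▸ hmD j)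
        · obtain ⟨j, hj⟩ := hRd (Y i)
          by_cases hji : j = i
          · subst hji; exact hj _ (mem_insert_self _ _)
          · have h1 := hY i j hji
            have h2 := hj _ (mem_insert_of_mem (hmD j))
            omega
      rcases hiab with rfl | rfl
      · left; rw [hyY]
      · right; rw [hyY]
    · rintro (rfl | rfl)
      · exact ⟨⟨by rw [card_insert_of_notMem (hYD a (Or.inl rfl))]; exact hDc, hYdom a⟩,
          subset_insert _ _⟩
      · exact ⟨⟨by rw [card_insert_of_notMem (hYD b (Or.inr rfl))]; exact hDc, hYdom b⟩,
          subset_insert _ _⟩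
  rw [key, card_pair]
  · exact ⟨1, rfl⟩
  · intro h
    have : Y a ∈ insert (Y b) D := by rw [← h]; exact mem_insert_self _ _
    rcases mem_insert.mp this with h | h
    · exact hYab h
    · exact hYD a (Or.inl rfl) h

/-- Scarf's combinatorial lemma. -/
theorem scarf (i0 : I) (v : I → X → ℕ) (hv : ∀ i, Function.Injective (v i)) (s : I → X)
    (h1 : ∀ i x, v i (s i) ≤ v i x)
    (h2 : ∀ i j t, j ≠ i → (∀ k, t ≠ s k) → v i t < v i (s j))
    (c : X → I) (hc : ∀ i, c (s i) = i) :
    ∃ R : Finset X, ScDom v R ∧ R.image c = univ := by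
  classical
  by_contra hcon
  push Not at hcon
  set F : Finset (Finset X) := {D | D.card + 1 = Fintype.card I ∧ D.image c = univ.erase i0}
    with hFdef
  set G : Finset (Finset X) := {R | R.card = Fintype.card I ∧ ScDom v R} with hGdef
  have hF : ∀ D, D ∈ F ↔ D.card + 1 = Fintype.card I ∧ D.image c = univ.erase i0 := by
    simp [hFdef]
  have hG : ∀ R, R ∈ G ↔ R.card = Fintype.card I ∧ ScDom v R := by simp [hGdef]
  have hsinj : Function.Injective s := fun i j h => by rw [← hc i, h, hc]
  set D0 : Finset X := (univ.erase i0).image s with hD0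
  have hpos : 0 < Fintype.card I := Fintype.card_pos_iff.mpr ⟨i0⟩
  have hD0F : D0 ∈ F := by
    rw [hF, hD0, card_image_of_injective _ hsinj, card_erase_of_mem (mem_univ _), card_univ]
    refine ⟨by omega, ?_⟩
    rw [image_image]
    have : c ∘ s = id := funext hc
    rw [this, image_id]
  have hsum := sum_card_bipartiteAbove_eq_sum_card_bipartiteBelow
    (s := F) (t := G) (fun D R => D ⊆ R)
  simp only [bipartiteAbove, bipartiteBelow] at hsum
  have hev : Even (∑ R ∈ G, #{D ∈ F | D ⊆ R}) := by
    apply even_sum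
    intro R hR
    rw [hG] at hR
    exact room_even c i0 R hR.1 (hcon R hR.2) F hF
  rw [← hsum, ← add_sum_erase _ _ hD0F] at hev
  have hev2 : Even (∑ D ∈ F.erase D0, #{R ∈ G | D ⊆ R}) := by
    apply even_sum
    intro D hD
    rw [mem_erase, hF] at hD
    obtain ⟨hne, hDc, hDi⟩ := hD
    have ht : ∃ t ∈ D, ∀ k, t ≠ s k := by
      by_contra hall
      push Not at hall
      apply hne
      apply eq_of_subset_of_card_le
      · intro t ht
        obtain ⟨k, rfl⟩ := hall t ht
        have : c (s k) ∈ D.image c := mem_image_of_mem _ ht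
        rw [hDi, hc] at this
        exact mem_image_of_mem _ this
      · have := ((hF _).mp hD0F).1
        omega
    obtain ⟨t, htD, ht⟩ := ht
    exact door_even v hv s D hDc (fun i j hj => ⟨t, htD, h2 i j t hj ht⟩) ⟨t, htD⟩ G hG
  have hone : #{R ∈ G | D0 ⊆ R} = 1 := by
    have hs0 : s i0 ∉ D0 := by
      simp only [hD0, mem_image, mem_erase, mem_univ, and_true, not_exists, not_and]
      intro k hk h
      exact hk (hsinj h)
    have hcne : (univ \ D0).Nonempty := ⟨s i0, by simp [hs0]⟩
    obtain ⟨y, hy, hmax⟩ := exists_max_image _ (v i0) hcne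
    simp only [mem_sdiff, mem_univ, true_and] at hy hmax
    have hsD0 : ∀ j, j ≠ i0 → s j ∈ D0 := fun j hj => by
      rw [hD0]; exact mem_image_of_mem _ (by simp [hj])
    have hD0c := ((hF _).mp hD0F).1
    rw [card_eq_one]
    refine ⟨insert y D0, ?_⟩
    ext R
    simp only [mem_filter, hG, mem_singleton]
    constructor
    · rintro ⟨⟨hRc, hRd⟩, hDR⟩
      obtain ⟨z, hz, rfl⟩ := exists_insert_of_card hDR (by omega)
      obtain ⟨j, hj⟩ := hRd y
      by_cases hji : j = i0
      · subst hji
        have := hj z (mem_insert_self _ _)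
        rw [hv j (le_antisymm this (hmax z hz))]
      · exfalso
        have := hj (s j) (mem_insert_of_mem (hsD0 j hji))
        have := hv j (le_antisymm this (h1 j y))
        exact hy (this ▸ hsD0 j hji)
    · rintro rfl
      refine ⟨⟨by rw [card_insert_of_notMem hy]; omega, ?_⟩, subset_insert _ _⟩
      intro z
      by_cases hz : z ∈ D0
      · obtain ⟨j, -, rfl⟩ := mem_image.mp hz
        exact ⟨j, fun x _ => h1 j x⟩
      · refine ⟨i0, fun x hx => ?_⟩
        rcases mem_insert.mp hx with rfl | hx
        · exact hmax z hz
        · obtain ⟨j, hj, rfl⟩ := mem_image.mp hx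
          have hj : j ≠ i0 := by simpa using hj
          by_cases hzs : ∃ k, z = s k
          · obtain ⟨k, rfl⟩ := hzs
            have : k = i0 := by
              by_contra hk; exact hz (hsD0 k hk)
            subst this
            exact h1 _ _
          · push Not at hzs
            exact (h2 i0 j z hj hzs).le
  rw [hone] at hev
  rw [Nat.even_add] at hev
  exact absurd (hev.mpr hev2) (by decide)

end

/-- Discrete form of Brouwer. -/
lemma discrete_brouwer {I : Type} [Fintype I] [DecidableEq I] [Nonempty I] (p : ℕ)
    (c : (I → ℕ) → I) :
    ∃ x : I → ℕ, ∑ i, x i = p ∧ ∀ i, x i ≤ Fintype.card I ∨ ∃ x' : I → ℕ, ∑ i, x' i = p ∧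
      c x' = i ∧ ∀ j, x j ≤ x' j + Fintype.card I ∧ x' j ≤ x j + Fintype.card I := by
  classical
  obtain ⟨i0⟩ := ‹Nonempty I›
  let T := {x : I → ℕ // x ∈ (univ : Finset I).piAntidiag p}
  have hT : ∀ x : T, ∑ i, x.1 i = p := fun x => (mem_piAntidiag.mp x.2).1
  have hTle : ∀ (x : T) i, x.1 i ≤ p := fun x i => by
    exact (single_le_sum (f := x.1) (fun _ _ => Nat.zero_le _) (mem_univ i)).trans_eq (hT x)
  let w : I → (T ⊕ I) → ℕ := fun i =>
    Sum.elim (fun x => x.1 i + 1) (fun j => if j = i then 0 else p + 2)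
  let e := Fintype.equivFin (T ⊕ I)
  let K := Fintype.card (T ⊕ I)
  let v : I → (T ⊕ I) → ℕ := fun i x => w i x * K + (e x : ℕ)
  have hlt : ∀ i x y, w i x < w i y → v i x < v i y := by
    intro i x y h
    have h1 : (e x : ℕ) < K := (e x).2
    have h2 : (w i x + 1) * K ≤ w i y * K := Nat.mul_le_mul_right _ h
    simp only [v]
    nlinarith
  have hle : ∀ i x y, v i x ≤ v i y → w i x ≤ w i y := by
    intro i x y h
    by_contra hc
    have := hlt i y x (by omega)
    omega
  have hv : ∀ i, Function.Injective (v i) := by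
    intro i x y h
    have hw : w i x = w i y := le_antisymm (hle _ _ _ h.le) (hle _ _ _ h.ge)
    simp only [v, hw] at h
    exact e.injective (Fin.ext (by omega))
  obtain ⟨R, hRd, hRc⟩ := scarf i0 v hv (Sum.inr : I → T ⊕ I)
    (by
      intro i x
      by_cases hx : x = Sum.inr i
      · rw [hx]
      · apply le_of_lt
        apply hlt
        rcases x with x | j
        · simp [w]
        · have : j ≠ i := fun h => hx (by rw [h])
          simp [w, this])
    (by
      intro i j t hj ht
      rcases t with x | k
      · apply hlt
        have := hTle x i
        simp only [w, Sum.elim_inl, Sum.elim_inr, hj, if_false]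
        omega
      · exact absurd rfl (ht k))
    (Sum.elim (fun x => c x.1) id) (fun i => rfl)
  have hdom : ∀ y : T, ∃ i, Sum.inr i ∉ R ∧ ∀ x : T, Sum.inl x ∈ R → y.1 i ≤ x.1 i := by
    intro y
    obtain ⟨i, hi⟩ := hRd (Sum.inl y)
    refine ⟨i, fun h => ?_, fun x hx => ?_⟩
    · have := hle _ _ _ (hi _ h)
      simp [w] at this
    · have := hle _ _ _ (hi _ hx)
      simpa [w] using this
  have hcol : ∀ i, Sum.inr i ∉ R → ∃ x : T, Sum.inl x ∈ R ∧ c x.1 = i := by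
    intro i hi
    have : i ∈ R.image (Sum.elim (fun x : T => c x.1) id) := by rw [hRc]; simp
    obtain ⟨r, hr, hri⟩ := mem_image.mp this
    rcases r with x | j
    · exact ⟨x, hr, hri⟩
    · have hj : j = i := hri
      exact absurd (hj ▸ hr) hi
  have hTne : Nonempty T := ⟨⟨Pi.single i0 p, by
    rw [mem_piAntidiag]; refine ⟨by simp, by simp⟩⟩⟩
  obtain ⟨y0⟩ := hTne
  obtain ⟨k0, hk0, -⟩ := hdom y0
  obtain ⟨x, hxR, -⟩ := hcol k0 hk0
  have hμ : ∀ i, ∃ μ : ℕ, (∀ x : T, Sum.inl x ∈ R → μ ≤ x.1 i) ∧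
      (Sum.inr i ∈ R → μ = 0) ∧ (Sum.inr i ∉ R → ∃ x : T, Sum.inl x ∈ R ∧ x.1 i = μ) := by
    intro i
    by_cases hi : Sum.inr i ∈ R
    · exact ⟨0, fun _ _ => Nat.zero_le _, fun _ => rfl, fun h => absurd hi h⟩
    · obtain ⟨m, hm, hmin⟩ := exists_min_image ({x : T | Sum.inl x ∈ R} : Finset T)
        (fun x => x.1 i) ⟨x, by simp [hxR]⟩
      simp only [mem_filter, mem_univ, true_and] at hm hmin
      exact ⟨m.1 i, hmin, fun h => absurd h hi, fun _ => ⟨m, hm, rfl⟩⟩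
  choose μ hμ1 hμ2 hμ3 using hμ
  have hsum : p ≤ ∑ i, μ i + Fintype.card I := by
    by_contra hc
    push Not at hc
    set y : I → ℕ := fun i => μ i + 1 + (if i = i0 then p - (∑ i, μ i + Fintype.card I) else 0)
      with hy
    have hys : ∑ i, y i = p := by
      simp only [hy, sum_add_distrib, sum_ite_eq', mem_univ, if_true, sum_const, card_univ,
        smul_eq_mul, mul_one]
      omega
    obtain ⟨i, hi, hi2⟩ := hdom ⟨y, by rw [mem_piAntidiag]; exact ⟨hys, by simp⟩⟩
    obtain ⟨z, hz, hz2⟩ := hμ3 i hi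
    have := hi2 z hz
    simp only [hy] at this
    omega
  have hup : ∀ z : T, Sum.inl z ∈ R → ∀ k, z.1 k ≤ μ k + Fintype.card I := by
    intro z hz k
    have h1 := hT z
    rw [← add_sum_erase _ _ (mem_univ k)] at h1 hsum
    have h2 : ∑ i ∈ univ.erase k, μ i ≤ ∑ i ∈ univ.erase k, z.1 i :=
      sum_le_sum fun i _ => hμ1 i z hz
    omega
  refine ⟨x.1, hT x, fun i => ?_⟩
  by_cases hi : Sum.inr i ∈ R
  · left
    have := hup x hxR i
    rw [hμ2 i hi] at this
    omega
  · right
    obtain ⟨x', hx', hc'⟩ := hcol i hi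
    refine ⟨x'.1, hT x', hc', fun j => ?_⟩
    have a1 := hup x hxR j
    have a2 := hup x' hx' j
    have a3 := hμ1 j x hxR
    have a4 := hμ1 j x' hx'
    omega

lemma approx_brouwer {I : Type} [Fintype I] [DecidableEq I] [Nonempty I]
    (f : (I → ℝ) → I → ℝ) (hf : Continuous f)
    (hm : ∀ z ∈ stdSimplex ℝ I, f z ∈ stdSimplex ℝ I) (ε : ℝ) (hε : 0 < ε) :
    ∃ z ∈ stdSimplex ℝ I, ∀ i, z i ≤ f z i + ε := by
  have huc := (isCompact_stdSimplex ℝ I).uniformContinuousOn_of_continuous hf.continuousOn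
  rw [Metric.uniformContinuousOn_iff_le] at huc
  obtain ⟨δ, hδ, huc⟩ := huc (ε / 2) (by positivity)
  set N := Fintype.card I
  obtain ⟨p, hp⟩ := exists_nat_gt ((N : ℝ) / min δ (ε / 2))
  have hmin : 0 < min δ (ε / 2) := lt_min hδ (by positivity)
  have hp0 : (0 : ℝ) < p := lt_of_le_of_lt (by positivity) hp
  have hNp : (N : ℝ) / p ≤ min δ (ε / 2) := by
    rw [div_lt_iff₀ hmin] at hp
    rw [div_le_iff₀ hp0]
    linarith
  have hNδ := hNp.trans (min_le_left _ _)
  have hNε := hNp.trans (min_le_right _ _)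
  let q : (I → ℕ) → I → ℝ := fun x i => (x i : ℝ) / p
  have hq : ∀ x : I → ℕ, ∑ i, x i = p → q x ∈ stdSimplex ℝ I := by
    intro x hx
    refine ⟨fun i => by positivity, ?_⟩
    simp only [q]
    rw [← sum_div, ← Nat.cast_sum, hx, div_self hp0.ne']
  have hcol : ∀ x : I → ℕ, ∃ i, ∑ i, x i = p → q x i ≤ f (q x) i := by
    intro x
    by_contra hcon
    push Not at hcon
    obtain ⟨i0⟩ := ‹Nonempty I›
    have hx := (hcon i0).1
    have h1 := (hm _ (hq x hx)).2
    have h2 := (hq x hx).2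
    have h3 : ∑ i, f (q x) i < ∑ i, q x i :=
      sum_lt_sum_of_nonempty ⟨i0, mem_univ _⟩ fun i _ => (hcon i).2
    linarith
  choose c hc using hcol
  obtain ⟨x, hx, hx2⟩ := discrete_brouwer p c
  refine ⟨q x, hq x hx, fun i => ?_⟩
  rcases hx2 i with h | ⟨x', hx', hci, hd⟩
  · have h1 : q x i ≤ N / p := by
      simp only [q]
      have : (x i : ℝ) ≤ N := by exact_mod_cast h
      gcongr
    have := (hm _ (hq x hx)).1 i
    linarith
  · have hd1 : ∀ j, |q x j - q x' j| ≤ N / p := by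
      intro j
      obtain ⟨d1, d2⟩ := hd j
      have d1' : (x j : ℝ) ≤ x' j + N := by exact_mod_cast d1
      have d2' : (x' j : ℝ) ≤ x j + N := by exact_mod_cast d2
      simp only [q]
      rw [← sub_div, abs_div, abs_of_pos hp0]
      gcongr
      rw [abs_le]
      constructor <;> linarith
    have hdist : dist (q x) (q x') ≤ δ := by
      rw [dist_pi_le_iff hδ.le]
      intro j
      rw [Real.dist_eq]
      exact (hd1 j).trans hNδ
    have h1 := huc _ (hq x hx) _ (hq x' hx') hdist
    have h2 := (dist_le_pi_dist _ _ i).trans h1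
    rw [Real.dist_eq] at h2
    have h3 := hc x' hx'
    rw [hci] at h3
    have h4 := abs_le.mp h2
    have h5 := abs_le.mp ((hd1 i).trans hNε)
    linarith [h4.1, h5.2]

/-- Brouwer's theorem on the standard simplex. -/
theorem brouwer_simplex {I : Type} [Fintype I] [DecidableEq I] [Nonempty I]
    (f : (I → ℝ) → I → ℝ) (hf : Continuous f)
    (hm : ∀ z ∈ stdSimplex ℝ I, f z ∈ stdSimplex ℝ I) :
    ∃ z ∈ stdSimplex ℝ I, f z = z := by
  have hg : Continuous fun z : I → ℝ => ∑ i, max (z i - f z i) 0 := by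
    have : ∀ i, Continuous fun z => f z i := fun i => (continuous_apply i).comp hf
    fun_prop
  obtain ⟨z1, hz1, -⟩ := approx_brouwer f hf hm 1 one_pos
  obtain ⟨z, hz, hzmin⟩ := (isCompact_stdSimplex ℝ I).exists_isMinOn ⟨z1, hz1⟩ hg.continuousOn
  have hN : (0 : ℝ) < Fintype.card I := by exact_mod_cast Fintype.card_pos
  have hle : ∑ i, max (z i - f z i) 0 ≤ 0 := by
    apply le_of_forall_pos_le_add
    intro ε hε
    obtain ⟨y, hy, hy2⟩ := approx_brouwer f hf hm (ε / Fintype.card I) (by positivity)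
    have h1 : ∑ i, max (z i - f z i) 0 ≤ ∑ i, max (y i - f y i) 0 := hzmin hy
    have h2 : ∑ i, max (y i - f y i) 0 ≤ ∑ _i : I, ε / Fintype.card I :=
      sum_le_sum fun i _ => max_le (by linarith [hy2 i]) (by positivity)
    rw [sum_const, card_univ, nsmul_eq_mul, mul_div_cancel₀ _ hN.ne'] at h2
    linarith
  have hzi : ∀ i, z i ≤ f z i := by
    intro i
    have h1 : max (z i - f z i) 0 ≤ ∑ i, max (z i - f z i) 0 :=
      single_le_sum (f := fun i => max (z i - f z i) 0) (fun _ _ => le_max_right _ _) (mem_univ i)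
    have := le_max_left (z i - f z i) 0
    linarith
  refine ⟨z, hz, ?_⟩
  have := (sum_eq_sum_iff_of_le fun i _ => hzi i).mp (by rw [hz.2, (hm z hz).2])
  funext i
  exact (this i (mem_univ i)).symm

/-- A retraction of `ℝ^m` onto the simplex. -/
noncomputable def retr {m : ℕ} (x : Fin (m + 1) → ℝ) : Fin (m + 1) → ℝ := fun α =>
  (max (x α) 0 + max (1 - ∑ β, max (x β) 0) 0 / (m + 1)) / max (∑ β, max (x β) 0) 1

lemma retr_cont {m : ℕ} : Continuous (retr (m := m)) := by
  unfold retr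
  refine continuous_pi fun α => ?_
  refine Continuous.div (by fun_prop) (by fun_prop) fun x => ?_
  exact (lt_of_lt_of_le one_pos (le_max_right _ _)).ne'

lemma retr_nonneg {m : ℕ} (x : Fin (m + 1) → ℝ) (α) : 0 ≤ retr x α := by
  unfold retr
  have h1 := le_max_right (x α) 0
  have h2 := le_max_right (1 - ∑ β, max (x β) 0) 0
  have h3 := (one_pos (α := ℝ)).trans_le (le_max_right (∑ β, max (x β) 0) 1)
  positivity

lemma retr_sum {m : ℕ} (x : Fin (m + 1) → ℝ) : ∑ α, retr x α = 1 := by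
  unfold retr
  have h3 := (one_pos (α := ℝ)).trans_le (le_max_right (∑ β, max (x β) 0) 1)
  rw [← sum_div, div_eq_one_iff_eq h3.ne', sum_add_distrib, sum_const, card_univ,
    Fintype.card_fin, nsmul_eq_mul]
  push_cast
  rw [mul_div_cancel₀ _ (by positivity)]
  rcases le_total (∑ β, max (x β) 0) 1 with h | h
  · rw [max_eq_right h, max_eq_left (by linarith)]; ring
  · rw [max_eq_left h, max_eq_right (by linarith)]; ring

lemma retr_id {m : ℕ} (x : Fin (m + 1) → ℝ) (h0 : ∀ α, 0 ≤ x α) (h1 : ∑ α, x α = 1) :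
    retr x = x := by
  have : ∀ α, max (x α) 0 = x α := fun α => max_eq_left (h0 α)
  funext α
  simp [retr, this, h1]

/-- Main theorem: a continuous incentive function with `x_{iα} + φ_{iα}(x) ≥ 0` on `Δ`
admits an incentive equilibrium in `Δ` for any finite game. -/
theorem exists_incentive_equilibrium {n : ℕ} (hn : 0 < n) (s : Fin n → ℕ)
    (φ : (∀ i, Fin (s i + 1) → ℝ) → ∀ i, Fin (s i + 1) → ℝ)
    (hφ : IsInc φ) (hcont : Continuous φ)
    (hpos : ∀ x ∈ Δset s, ∀ i α, 0 ≤ x i α + φ x i α) :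
    ∃ x ∈ Δset s, IncEq φ x := by
  have hne : ∀ x i, 1 + ∑ β, φ x i β ≠ 0 := fun x i h => hφ.2 x i (by linarith)
  have hTc : Continuous (Tmap φ) := by
    have h1 : ∀ i α, Continuous fun x => φ x i α := fun i α => by fun_prop
    refine continuous_pi fun i => continuous_pi fun α => ?_
    exact Continuous.div (by fun_prop) (by fun_prop) fun x => hne x i
  have hT : ∀ x ∈ Δset s, Tmap φ x ∈ Δset s := by
    intro x hx
    have hs : ∀ i, ∑ α, (x i α + φ x i α) = 1 + ∑ β, φ x i β := fun i => by
      rw [sum_add_distrib, hx.2 i]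
    have hp : ∀ i, 0 ≤ 1 + ∑ β, φ x i β := fun i => by
      rw [← hs]; exact sum_nonneg fun α _ => hpos x hx i α
    refine ⟨fun i α => div_nonneg (hpos x hx i α) (hp i), fun i => ?_⟩
    simp only [Tmap]
    rw [← sum_div, hs, div_self (hne x i)]
  let I := Σ i : Fin n, Fin (s i + 1)
  have hI : Nonempty I := ⟨⟨⟨0, hn⟩, 0⟩⟩
  have hn' : (0 : ℝ) < n := by exact_mod_cast hn
  let r : (I → ℝ) → ∀ i, Fin (s i + 1) → ℝ := fun z i => retr fun α => n * z ⟨i, α⟩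
  have hr : ∀ z, r z ∈ Δset s := fun z => ⟨fun i α => retr_nonneg _ _, fun i => retr_sum _⟩
  have hrc : Continuous r := by
    refine continuous_pi fun i => retr_cont.comp ?_
    fun_prop
  obtain ⟨z, hz, hfz⟩ := brouwer_simplex (I := I) (fun z k => Tmap φ (r z) k.1 k.2 / n)
    (by
      have h : Continuous fun z => Tmap φ (r z) := hTc.comp hrc
      refine continuous_pi fun k => Continuous.div_const ?_ _
      exact (continuous_apply k.2).comp ((continuous_apply k.1).comp h))
    (by
      intro z _
      have h := hT _ (hr z)
      refine ⟨fun k => div_nonneg (h.1 _ _) hn'.le, ?_⟩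
      rw [← sum_div, Fintype.sum_sigma]
      simp only [h.2]
      simp [hn'.ne'])
  have hx : ∀ i α, n * z ⟨i, α⟩ = Tmap φ (r z) i α := by
    intro i α
    have := congrFun hfz ⟨i, α⟩
    simp only at this
    rw [← this]
    field_simp
  have h := hT _ (hr z)
  have hrz : r z = Tmap φ (r z) := by
    funext i
    have : (fun α => (n : ℝ) * z ⟨i, α⟩) = Tmap φ (r z) i := funext (hx i)
    change retr (fun α => (n : ℝ) * z ⟨i, α⟩) = _
    rw [this]
    exact retr_id _ (h.1 i) (h.2 i)
  refine ⟨r z, hr z, fun i α => ?_⟩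
  have h1 := congrFun (congrFun hrz i) α
  simp only [Tmap] at h1
  rw [eq_div_iff (hne _ i)] at h1
  linarith
end

section
/- Let n = 2 with s_1 = s_2, and let φ be a continuous incentive function such that x_{iα} + φ_{iα}(x) ≥ 0 for every x ∈ Δ, i ∈ {1,2}, and α, and such that φ_1(x) = φ_2(x) for every x ∈ Δ with x_1 = x_2. Then there exists a symmetric incentive equilibrium: some x̂ ∈ Δ with x̂_1 = x̂_2 satisfying φ_{iα}(x̂) = x̂_{iα} · Σ_β φ_{iβ}(x̂) for every player i and strategy α. -/
open Finset

section ScarfLemma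

variable {T I : Type} [Fintype T] [Fintype I] [DecidableEq T] [DecidableEq I]

/-- Scarf dominance of a pair `(σ, C)` with respect to ranks `r`. -/
def SDom (r : I → T → ℕ) (σ : Finset T) (C : Finset I) : Prop :=
  ∀ y, ∃ i ∈ C, ∀ x ∈ σ, r i y ≤ r i x

theorem SDom.mono {T I : Type} {r : I → T → ℕ} {σ τ : Finset T} {C D : Finset I} (h : SDom r σ C)
    (h1 : τ ⊆ σ) (h2 : C ⊆ D) : SDom r τ D := by
  intro y
  obtain ⟨i, hi, hx⟩ := h y
  exact ⟨i, h2 hi, fun x hx' => hx x (h1 hx')⟩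

/-- Adjacency of a door and a room. -/
def SAdj (d ρ : Finset T × Finset I) : Prop :=
  (ρ.2 = d.2 ∧ ∃ y, y ∉ d.1 ∧ ρ.1 = insert y d.1) ∨
  (ρ.1 = d.1 ∧ ∃ k, k ∉ ρ.2 ∧ d.2 = insert k ρ.2)

def SDoor (r : I → T → ℕ) (c : T → I) (i0 : I) (d : Finset T × Finset I) : Prop :=
  SDom r d.1 d.2 ∧ i0 ∈ d.2 ∧ d.1.image c = d.2.erase i0 ∧ d.2.card = d.1.card + 1

def SRoom (r : I → T → ℕ) (d : Finset T × Finset I) : Prop :=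
  SDom r d.1 d.2 ∧ d.1.card = d.2.card

open Classical in
theorem room_even_s5 (r : I → T → ℕ) (c : T → I) (i0 : I) (ρ : Finset T × Finset I)
    (hρ : SRoom r ρ) (hnc : ρ.1.image c ≠ ρ.2) :
    Even (Finset.univ.filter (fun d => SDoor r c i0 d ∧ SAdj d ρ)).card := by
  obtain ⟨τ, D⟩ := ρ
  obtain ⟨hdom, hcard⟩ := hρ
  simp only at hdom hcard hnc
  by_cases h2 : ∃ k, k ∉ D ∧ SDoor r c i0 (τ, insert k D)
  · obtain ⟨k, hkD, hd⟩ := h2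
    obtain ⟨-, hi0, him, -⟩ := id hd
    simp only at hi0 him
    have hk0 : k ≠ i0 := by
      rintro rfl
      apply hnc
      rw [him, Finset.erase_insert hkD]
    have hi0D : i0 ∈ D := by
      rcases Finset.mem_insert.1 hi0 with h | h
      · exact absurd h.symm hk0
      · exact h
    have hinj : Set.InjOn c τ := by
      rw [← Finset.card_image_iff, him, Finset.card_erase_of_mem hi0,
        Finset.card_insert_of_notMem hkD]
      omega
    have hkim : k ∈ τ.image c := by
      rw [him]; simp [hk0]
    obtain ⟨x, hx, hcx⟩ := Finset.mem_image.1 hkim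
    have him' : (τ.erase x).image c = D.erase i0 := by
      ext j
      have hj : j ∈ τ.image c ↔ j ∈ (insert k D).erase i0 := by rw [him]
      simp only [Finset.mem_image, Finset.mem_erase, Finset.mem_insert] at hj ⊢
      constructor
      · rintro ⟨z, ⟨hzx, hz⟩, rfl⟩
        have := hj.1 ⟨z, hz, rfl⟩
        refine ⟨this.1, this.2.resolve_left ?_⟩
        intro h
        exact hzx (hinj hz hx (h.trans hcx.symm))
      · rintro ⟨hj0, hjD⟩
        obtain ⟨z, hz, hzj⟩ := hj.2 ⟨hj0, Or.inr hjD⟩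
        refine ⟨z, ⟨?_, hz⟩, hzj⟩
        rintro rfl
        apply hkD
        rw [← hcx, hzj]; exact hjD
    have hset : Finset.univ.filter (fun d => SDoor r c i0 d ∧ SAdj d (τ, D)) =
        {(τ, insert k D), (τ.erase x, D)} := by
      ext ⟨σ, C⟩
      simp only [Finset.mem_filter, Finset.mem_univ, true_and, Finset.mem_insert,
        Finset.mem_singleton, Prod.mk.injEq]
      constructor
      · rintro ⟨⟨-, h0, hi, -⟩, hadj⟩
        simp only at h0 hi
        rcases hadj with ⟨h, y, hy, hy'⟩ | ⟨h, k', hk', hk''⟩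
        · right
          simp only at h hy hy'
          refine ⟨?_, h.symm⟩
          have hxσ : x ∉ σ := by
            intro hxσ
            have : k ∈ σ.image c := Finset.mem_image.2 ⟨x, hxσ, hcx⟩
            rw [hi, ← h] at this
            exact hkD (Finset.mem_of_mem_erase this)
          have hxy : x = y := by
            rw [hy'] at hx
            exact (Finset.mem_insert.1 hx).resolve_right hxσ
          rw [hy', hxy, Finset.erase_insert hy]
        · left
          simp only at h hk' hk''
          refine ⟨h.symm, ?_⟩
          have : k ∈ σ.image c := by rw [← h]; exact hkim
          rw [hi, hk''] at this
          have := (Finset.mem_insert.1 (Finset.mem_of_mem_erase this)).resolve_right hkD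
          rw [hk'', this]
      · rintro (⟨rfl, rfl⟩ | ⟨rfl, rfl⟩)
        · exact ⟨hd, Or.inr ⟨rfl, k, hkD, rfl⟩⟩
        · refine ⟨⟨hdom.mono (Finset.erase_subset _ _) (Finset.Subset.refl _), hi0D, him', ?_⟩,
            Or.inl ⟨rfl, x, Finset.notMem_erase _ _, (Finset.insert_erase hx).symm⟩⟩
          simp only
          rw [Finset.card_erase_add_one hx, hcard]
    rw [hset, Finset.card_pair]
    · exact even_two
    · intro h
      have := (Prod.mk.inj h).2
      exact hkD (this ▸ Finset.mem_insert_self k D)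
  · by_cases h1 : ∃ y ∈ τ, SDoor r c i0 (τ.erase y, D)
    · obtain ⟨y, hy, hd⟩ := h1
      obtain ⟨-, hi0, him, hc⟩ := id hd
      simp only at hi0 him hc
      have himτ : τ.image c = insert (c y) (D.erase i0) := by
        rw [← him, ← Finset.image_insert, Finset.insert_erase hy]
      have hcy0 : c y ≠ i0 := by
        intro h
        apply hnc
        rw [himτ, h, Finset.insert_erase hi0]
      have hcyD : c y ∈ D := by
        by_contra hcyD
        apply h2
        refine ⟨c y, hcyD, hdom.mono (Finset.Subset.refl _) (Finset.subset_insert _ _),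
          Finset.mem_insert_of_mem hi0, ?_, ?_⟩
        · simp only
          rw [himτ, Finset.erase_insert_of_ne hcy0]
        · simp only
          rw [Finset.card_insert_of_notMem hcyD, hcard]
      have hinj : ∀ z ∈ τ, (τ.erase z).image c = D.erase i0 → Set.InjOn c (τ.erase z) := by
        intro z hz h
        rw [← Finset.card_image_iff, h, Finset.card_erase_of_mem hi0,
          Finset.card_erase_of_mem hz, hcard]
      have : c y ∈ (τ.erase y).image c := by
        rw [him]; exact Finset.mem_erase.2 ⟨hcy0, hcyD⟩
      obtain ⟨x, hx, hxy⟩ := Finset.mem_image.1 this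
      have hxτ := Finset.mem_of_mem_erase hx
      have hne := Finset.ne_of_mem_erase hx
      have himx : (τ.erase x).image c = D.erase i0 := by
        rw [← him]
        ext j
        simp only [Finset.mem_image, Finset.mem_erase]
        constructor
        · rintro ⟨z, ⟨hz, hz'⟩, rfl⟩
          by_cases hzy : z = y
          · exact ⟨x, ⟨hne, hxτ⟩, by rw [hxy, hzy]⟩
          · exact ⟨z, ⟨hzy, hz'⟩, rfl⟩
        · rintro ⟨z, ⟨hz, hz'⟩, rfl⟩
          by_cases hzy : z = x
          · exact ⟨y, ⟨hne.symm, hy⟩, by rw [← hxy, hzy]⟩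
          · exact ⟨z, ⟨hzy, hz'⟩, rfl⟩
      have hset : Finset.univ.filter (fun d => SDoor r c i0 d ∧ SAdj d (τ, D)) =
          {(τ.erase y, D), (τ.erase x, D)} := by
        ext ⟨σ, C⟩
        simp only [Finset.mem_filter, Finset.mem_univ, true_and, Finset.mem_insert,
          Finset.mem_singleton, Prod.mk.injEq]
        constructor
        · rintro ⟨hd', hadj⟩
          rcases hadj with ⟨h, z, hz, hz'⟩ | ⟨h, k', hk', hk''⟩
          · simp only at h hz hz'
            have hσ : σ = τ.erase z := by rw [hz', Finset.erase_insert hz]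
            have hzτ : z ∈ τ := by rw [hz']; exact Finset.mem_insert_self _ _
            have hi := hd'.2.2.1
            simp only at hi
            rw [hσ, ← h] at hi
            have hj := hinj z hzτ hi
            by_cases hzy : z = y
            · left; exact ⟨by rw [hσ, hzy], h.symm⟩
            · right
              refine ⟨?_, h.symm⟩
              by_cases hzx : z = x
              · rw [hσ, hzx]
              · exfalso
                apply hne
                apply hj _ _ hxy
                · exact Finset.mem_coe.2 (Finset.mem_erase.2 ⟨Ne.symm hzx, hxτ⟩)
                · exact Finset.mem_coe.2 (Finset.mem_erase.2 ⟨Ne.symm hzy, hy⟩)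
          · simp only at h hk' hk''
            exact absurd ⟨k', hk', by rw [h, ← hk'']; exact hd'⟩ h2
        · have key : ∀ z ∈ τ, (τ.erase z).image c = D.erase i0 →
              SDoor r c i0 (τ.erase z, D) ∧ SAdj (τ.erase z, D) (τ, D) := by
            intro z hz hi
            refine ⟨⟨hdom.mono (Finset.erase_subset _ _) (Finset.Subset.refl _), hi0, hi, ?_⟩,
              Or.inl ⟨rfl, z, Finset.notMem_erase _ _, (Finset.insert_erase hz).symm⟩⟩
            simp only
            rw [Finset.card_erase_add_one hz, hcard]
          rintro (⟨rfl, rfl⟩ | ⟨rfl, rfl⟩)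
          · exact key y hy him
          · exact key x hxτ himx
      rw [hset, Finset.card_pair]
      · exact even_two
      · intro h
        have h' := (Prod.mk.inj h).1
        rw [← h'] at himx
        have : x ∈ τ.erase x := by rw [← h']; exact hx
        exact Finset.notMem_erase _ _ this
    · have hset : Finset.univ.filter (fun d => SDoor r c i0 d ∧ SAdj d (τ, D)) = ∅ := by
        rw [Finset.filter_eq_empty_iff]
        rintro ⟨σ, C⟩ - ⟨hd', hadj⟩
        rcases hadj with ⟨h, z, hz, hz'⟩ | ⟨h, k', hk', hk''⟩
        · simp only at h hz hz'
          apply h1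
          refine ⟨z, by rw [hz']; exact Finset.mem_insert_self _ _, ?_⟩
          rw [hz', Finset.erase_insert hz, h]; exact hd'
        · simp only at h hk' hk''
          exact h2 ⟨k', hk', by rw [h, ← hk'']; exact hd'⟩
      rw [hset]; simp

open Classical in
theorem door_two (r : I → T → ℕ) (hr : ∀ i, Function.Injective (r i))
    (σ : Finset T) (C : Finset I) (hσ : σ.Nonempty)
    (hdom : SDom r σ C) (hcard : C.card = σ.card + 1) :
    (Finset.univ.filter (fun ρ => SRoom r ρ ∧ SAdj (σ, C) ρ)).card = 2 := by
  have hm : ∀ i, ∃ z ∈ σ, ∀ x ∈ σ, r i z ≤ r i x := fun i => Finset.exists_min_image σ (r i) hσ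
  choose m hmσ hmle using hm
  -- surjectivity for dominant pairs
  have hsurj : ∀ D : Finset I, SDom r σ D → D.image m = σ := by
    intro D hD
    apply Finset.Subset.antisymm
    · intro z hz
      obtain ⟨i, -, rfl⟩ := Finset.mem_image.1 hz
      exact hmσ i
    · intro z hz
      obtain ⟨i, hi, h⟩ := hD z
      exact Finset.mem_image.2 ⟨i, hi, hr i (le_antisymm (hmle i z hz) (h _ (hmσ i)))⟩
  obtain ⟨a, ha, b, hb, hab, hmab⟩ := Finset.exists_ne_map_eq_of_card_lt_of_maps_to
    (s := C) (t := σ) (by omega) (f := m) (fun i _ => hmσ i)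
  let P : I → Finset T × Finset I → Prop := fun k ρ => SDom r ρ.1 ρ.2 ∧
    ((ρ.1 = σ ∧ ρ.2 = C.erase k) ∨
      (ρ.2 = C ∧ ∃ y, y ∉ σ ∧ ρ.1 = insert y σ ∧ r k y < r k (m k) ∧
        ∀ l ∈ C, l ≠ k → r l (m l) < r l y))
  have hPex : ∀ k ∈ C, ∀ j ∈ C, j ≠ k → m j = m k → ∃ ρ, P k ρ := by
    intro k hk j hj hjk hjm
    by_cases h : SDom r σ (C.erase k)
    · exact ⟨(σ, C.erase k), h, Or.inl ⟨rfl, rfl⟩⟩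
    · let Y := Finset.univ.filter (fun y => ∀ l ∈ C, l ≠ k → r l (m l) < r l y)
      have hY : Y.Nonempty := by
        unfold SDom at h
        push Not at h
        obtain ⟨y, hy⟩ := h
        refine ⟨y, ?_⟩
        simp only [Y, Finset.mem_filter, Finset.mem_univ, true_and]
        intro l hl hlk
        obtain ⟨x, hx, hlt⟩ := hy l (Finset.mem_erase.2 ⟨hlk, hl⟩)
        exact lt_of_le_of_lt (hmle l x hx) hlt
      obtain ⟨y, hyY, hymax⟩ := Finset.exists_max_image Y (r k) hY
      have hy : ∀ l ∈ C, l ≠ k → r l (m l) < r l y := by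
        simpa [Y] using hyY
      have hky : ∀ x ∈ σ, r k y ≤ r k x := by
        obtain ⟨i, hi, hix⟩ := hdom y
        by_cases hik : i = k
        · rw [← hik]; exact hix
        · exact absurd (hix _ (hmσ i)) (not_le.2 (hy i hi hik))
      have hyσ : y ∉ σ := by
        intro hyσ
        have hyk : y = m k := hr k (le_antisymm (hky _ (hmσ k)) (hmle k y hyσ))
        have := hy j hj hjk
        rw [hjm, hyk] at this
        exact lt_irrefl _ this
      refine ⟨(insert y σ, C), ?_, Or.inr ⟨rfl, y, hyσ, rfl, ?_, hy⟩⟩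
      · intro z
        by_contra hz
        push Not at hz
        have hzY : z ∈ Y := by
          simp only [Y, Finset.mem_filter, Finset.mem_univ, true_and]
          intro l hl hlk
          obtain ⟨x, hx, hlt⟩ := hz l hl
          rcases Finset.mem_insert.1 hx with rfl | hx
          · exact (hy l hl hlk).trans hlt
          · exact lt_of_le_of_lt (hmle l x hx) hlt
        obtain ⟨x, hx, hlt⟩ := hz k hk
        have := hymax z hzY
        rcases Finset.mem_insert.1 hx with rfl | hx
        · omega
        · have := hky x hx
          omega
      · refine lt_of_le_of_ne (hky _ (hmσ k)) ?_
        intro h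
        exact hyσ (hr k h ▸ hmσ k)
  have hPuniq : ∀ k ∈ C, ∀ ρ ρ', P k ρ → P k ρ' → ρ = ρ' := by
    intro k hk
    have mixed : ∀ y, SDom r σ (C.erase k) → ¬ ∀ l ∈ C, l ≠ k → r l (m l) < r l y := by
      intro y hd hy
      obtain ⟨i, hi, hx⟩ := hd y
      have h1 := hx _ (hmσ i)
      have h2 := hy i (Finset.mem_of_mem_erase hi) (Finset.ne_of_mem_erase hi)
      omega
    have cmp : ∀ y y', SDom r (insert y σ) C → (∀ l ∈ C, l ≠ k → r l (m l) < r l y') →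
        r k y' ≤ r k y := by
      intro y y' hd hy'
      obtain ⟨i, hi, hx⟩ := hd y'
      by_cases hik : i = k
      · rw [← hik]; exact hx y (Finset.mem_insert_self _ _)
      · have h1 := hx _ (Finset.mem_insert_of_mem (hmσ i))
        have h2 := hy' i hi hik
        omega
    rintro ⟨τ, D⟩ ⟨τ', D'⟩ ⟨hd, h⟩ ⟨hd', h'⟩
    simp only at hd hd' h h'
    rcases h with ⟨rfl, rfl⟩ | ⟨rfl, y, hy, rfl, hyk, hyl⟩
    · rcases h' with ⟨rfl, rfl⟩ | ⟨rfl, y', hy', rfl, hyk', hyl'⟩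
      · rfl
      · exact absurd hyl' (mixed y' hd)
    · rcases h' with ⟨rfl, rfl⟩ | ⟨rfl, y', hy', rfl, hyk', hyl'⟩
      · exact absurd hyl (mixed y hd')
      · have : y = y' := hr k (le_antisymm (cmp _ _ hd' hyl) (cmp _ _ hd hyl'))
        rw [this]
  have hPadj : ∀ k ∈ C, ∀ ρ, P k ρ → SRoom r ρ ∧ SAdj (σ, C) ρ := by
    rintro k hk ⟨τ, D⟩ ⟨hd, h⟩
    simp only at hd h
    rcases h with ⟨rfl, rfl⟩ | ⟨rfl, y, hy, rfl, hyk, hyl⟩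
    · refine ⟨⟨hd, ?_⟩, Or.inr ⟨rfl, k, Finset.notMem_erase _ _, (Finset.insert_erase hk).symm⟩⟩
      simp only
      rw [Finset.card_erase_of_mem hk]; omega
    · refine ⟨⟨hd, ?_⟩, Or.inl ⟨rfl, y, hy, rfl⟩⟩
      simp only
      rw [Finset.card_insert_of_notMem hy]; omega
  -- if `m` maps `C.erase k` onto `σ`, then `k` is `a` or `b`
  have hkab : ∀ k ∈ C, (C.erase k).image m = σ → k = a ∨ k = b := by
    intro k hk him
    have hinj : Set.InjOn m (C.erase k) := by
      rw [← Finset.card_image_iff, him, Finset.card_erase_of_mem hk]; omega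
    by_contra hno
    push Not at hno
    apply hab
    apply hinj _ _ hmab
    · exact Finset.mem_coe.2 (Finset.mem_erase.2 ⟨Ne.symm hno.1, ha⟩)
    · exact Finset.mem_coe.2 (Finset.mem_erase.2 ⟨Ne.symm hno.2, hb⟩)
  have hadjP : ∀ ρ, SRoom r ρ → SAdj (σ, C) ρ → P a ρ ∨ P b ρ := by
    rintro ⟨τ, D⟩ ⟨hd, hc⟩ hadj
    simp only at hd hc
    rcases hadj with ⟨h, y, hy, hy'⟩ | ⟨h, k, hk, hk'⟩
    · simp only at h hy hy'
      subst h hy'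
      let S := D.filter (fun i => r i (m i) < r i y)
      have hSim : S.image m = σ := by
        apply Finset.Subset.antisymm
        · intro z hz
          obtain ⟨i, -, rfl⟩ := Finset.mem_image.1 hz
          exact hmσ i
        · intro z hz
          obtain ⟨i, hi, hx⟩ := hd z
          have hzm : m i = z :=
            hr i (le_antisymm (hmle i z hz) (hx _ (Finset.mem_insert_of_mem (hmσ i))))
          refine Finset.mem_image.2 ⟨i, ?_, hzm⟩
          simp only [S, Finset.mem_filter]
          refine ⟨hi, ?_⟩
          rw [hzm]
          refine lt_of_le_of_ne (hx y (Finset.mem_insert_self _ _)) ?_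
          intro h
          exact hy (hr i h ▸ hz)
      obtain ⟨k, hk, hkx⟩ := hd y
      have hkS : k ∉ S := by
        simp only [S, Finset.mem_filter, not_and, not_lt]
        intro _
        exact hkx _ (Finset.mem_insert_of_mem (hmσ k))
      have hSsub : S ⊆ D.erase k := by
        intro i hi
        refine Finset.mem_erase.2 ⟨?_, (Finset.mem_filter.1 hi).1⟩
        rintro rfl
        exact hkS hi
      have hSeq : S = D.erase k := by
        apply Finset.eq_of_subset_of_card_le hSsub
        rw [Finset.card_erase_of_mem hk, hcard]
        calc σ.card + 1 - 1 = (S.image m).card := by rw [hSim]; omega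
          _ ≤ S.card := Finset.card_image_le
      have hPk : P k (insert y σ, D) := by
        refine ⟨hd, Or.inr ⟨rfl, y, hy, rfl, ?_, ?_⟩⟩
        · refine lt_of_le_of_ne (hkx _ (Finset.mem_insert_of_mem (hmσ k))) ?_
          intro h
          exact hy (hr k h ▸ hmσ k)
        · intro l hl hlk
          have : l ∈ S := by rw [hSeq]; exact Finset.mem_erase.2 ⟨hlk, hl⟩
          exact (Finset.mem_filter.1 this).2
      rcases hkab k hk (hSeq ▸ hSim) with rfl | rfl
      · exact Or.inl hPk
      · exact Or.inr hPk
    · simp only at h hk hk'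
      subst h
      have hD : D = C.erase k := by rw [hk', Finset.erase_insert hk]
      have hkC : k ∈ C := by rw [hk']; exact Finset.mem_insert_self _ _
      have hPk : P k (τ, D) := ⟨hd, Or.inl ⟨rfl, hD⟩⟩
      rcases hkab k hkC (hD ▸ hsurj D hd) with rfl | rfl
      · exact Or.inl hPk
      · exact Or.inr hPk
  obtain ⟨ρa, hρa⟩ := hPex a ha b hb hab.symm hmab.symm
  obtain ⟨ρb, hρb⟩ := hPex b hb a ha hab hmab
  rw [Finset.card_eq_two]
  refine ⟨ρa, ρb, ?_, ?_⟩
  · rintro rfl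
    obtain ⟨-, h⟩ := hρa
    obtain ⟨-, h'⟩ := hρb
    rcases h with ⟨h1, h2⟩ | ⟨h2, y, hy, h1, hyk, hyl⟩
    · rcases h' with ⟨h1', h2'⟩ | ⟨h2', y', hy', h1', hyk', hyl'⟩
      · have : a ∈ C.erase a := by
          rw [← h2, h2']; exact Finset.mem_erase.2 ⟨hab, ha⟩
        exact Finset.notMem_erase _ _ this
      · have : a ∈ C.erase a := by rw [← h2, h2']; exact ha
        exact Finset.notMem_erase _ _ this
    · rcases h' with ⟨h1', h2'⟩ | ⟨h2', y', hy', h1', hyk', hyl'⟩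
      · have : b ∈ C.erase b := by rw [← h2', h2]; exact hb
        exact Finset.notMem_erase _ _ this
      · have : y = y' := by
          have hy2 : y ∈ insert y' σ := by rw [← h1', h1]; exact Finset.mem_insert_self _ _
          exact (Finset.mem_insert.1 hy2).resolve_right hy
        subst this
        have := hyl' a ha hab
        omega
  · ext ρ
    simp only [Finset.mem_filter, Finset.mem_univ, true_and, Finset.mem_insert,
      Finset.mem_singleton]
    constructor
    · rintro ⟨h1, h2⟩
      rcases hadjP ρ h1 h2 with h | h
      · exact Or.inl (hPuniq a ha _ _ h hρa)
      · exact Or.inr (hPuniq b hb _ _ h hρb)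
    · rintro (rfl | rfl)
      · exact hPadj a ha _ hρa
      · exact hPadj b hb _ hρb

open Classical in
theorem door_one [Nonempty T] (r : I → T → ℕ) (hr : ∀ i, Function.Injective (r i)) (i0 : I) :
    (Finset.univ.filter (fun ρ => SRoom r ρ ∧
      SAdj ((∅ : Finset T), ({i0} : Finset I)) ρ)).card = 1 := by
  obtain ⟨y, -, hy⟩ := Finset.exists_max_image (Finset.univ : Finset T) (r i0) Finset.univ_nonempty
  rw [Finset.card_eq_one]
  refine ⟨({y}, {i0}), ?_⟩
  ext ⟨τ, D⟩
  simp only [Finset.mem_filter, Finset.mem_univ, true_and, Finset.mem_singleton, Prod.mk.injEq]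
  constructor
  · rintro ⟨⟨hd, hc⟩, hadj⟩
    rcases hadj with ⟨h, z, hz, hz'⟩ | ⟨h, k, hk, hk'⟩
    · simp only at h hz hz' hd
      subst h hz'
      refine ⟨?_, rfl⟩
      obtain ⟨i, hi, hx⟩ := hd y
      rw [Finset.mem_singleton] at hi
      subst hi
      have h1 := hx z (Finset.mem_insert_self _ _)
      have : z = y := hr i (le_antisymm (hy z (Finset.mem_univ _)) h1)
      rw [this]; rfl
    · simp only at h hk hk' hd hc
      subst h
      have hD : D = ∅ := by
        rw [← Finset.card_eq_zero, ← hc]; rfl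
      subst hD
      obtain ⟨i, hi, -⟩ := hd y
      exact absurd hi (Finset.notMem_empty _)
  · rintro ⟨rfl, rfl⟩
    refine ⟨⟨?_, by simp⟩, Or.inl ⟨rfl, y, by simp, rfl⟩⟩
    intro z
    refine ⟨i0, by simp, ?_⟩
    intro x hx
    rw [Finset.mem_singleton.1 hx]
    exact hy z (Finset.mem_univ _)

open Classical in
theorem scarf_lemma [Nonempty T] [Nonempty I] (r : I → T → ℕ)
    (hr : ∀ i, Function.Injective (r i)) (c : T → I) :
    ∃ σ : Finset T, ∃ C : Finset I, SDom r σ C ∧ σ.image c = C := by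
  by_contra hno
  push Not at hno
  let i0 : I := Classical.arbitrary I
  let doors := (Finset.univ : Finset (Finset T × Finset I)).filter (SDoor r c i0)
  let rooms := (Finset.univ : Finset (Finset T × Finset I)).filter (SRoom r)
  have hcount : ∑ d ∈ doors, (rooms.filter (fun ρ => SAdj d ρ)).card =
      ∑ ρ ∈ rooms, (doors.filter (fun d => SAdj d ρ)).card :=
    Finset.sum_card_bipartiteAbove_eq_sum_card_bipartiteBelow SAdj
  have hR : Even (∑ ρ ∈ rooms, (doors.filter (fun d => SAdj d ρ)).card) := by
    apply Finset.even_sum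
    intro ρ hρ
    have hρ' : SRoom r ρ := (Finset.mem_filter.1 hρ).2
    have := room_even_s5 r c i0 ρ hρ' (hno _ _ hρ'.1)
    simpa only [doors, Finset.filter_filter] using this
  have hout : ((∅ : Finset T), ({i0} : Finset I)) ∈ doors := by
    simp only [doors, Finset.mem_filter, Finset.mem_univ, true_and]
    refine ⟨?_, by simp, by simp, by simp⟩
    intro y
    exact ⟨i0, by simp, by simp⟩
  have hL : Odd (∑ d ∈ doors, (rooms.filter (fun ρ => SAdj d ρ)).card) := by
    rw [← Finset.add_sum_erase _ _ hout]
    apply Odd.add_even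
    · have := door_one r hr i0
      simp only [rooms, Finset.filter_filter]
      rw [this]; exact odd_one
    · apply Finset.even_sum
      rintro ⟨σ, C⟩ hd
      have hne := Finset.ne_of_mem_erase hd
      obtain ⟨h1, h2, h3, h4⟩ := (Finset.mem_filter.1 (Finset.mem_of_mem_erase hd)).2
      simp only at h1 h2 h3 h4
      have hσ : σ.Nonempty := by
        rw [Finset.nonempty_iff_ne_empty]
        rintro rfl
        apply hne
        have : C.card = 1 := by simpa using h4
        obtain ⟨j, rfl⟩ := Finset.card_eq_one.1 this
        rw [Finset.mem_singleton] at h2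
        rw [h2]
      have := door_two r hr σ C hσ h1 h4
      simp only [rooms, Finset.filter_filter]
      rw [this]; exact even_two
  rw [hcount] at hL
  exact (Nat.not_even_iff_odd.2 hL) hR

end ScarfLemma

theorem brouwer_approx (m : ℕ) (f : (Fin (m + 1) → ℝ) → (Fin (m + 1) → ℝ))
    (hf : ContinuousOn f (stdSimplex ℝ (Fin (m + 1))))
    (hmaps : ∀ x ∈ stdSimplex ℝ (Fin (m + 1)), f x ∈ stdSimplex ℝ (Fin (m + 1)))
    (ε : ℝ) (hε : 0 < ε) :
    ∃ x ∈ stdSimplex ℝ (Fin (m + 1)), ∀ i, x i - ε ≤ f x i := by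
  classical
  have huc := (isCompact_stdSimplex ℝ (Fin (m + 1))).uniformContinuousOn_of_continuous hf
  rw [Metric.uniformContinuousOn_iff] at huc
  obtain ⟨δ, hδ, huc⟩ := huc (ε / 2) (by positivity)
  obtain ⟨N, hN⟩ := exists_nat_gt (((m + 1 : ℕ) : ℝ) / min δ (ε / 2))
  have hmin : 0 < min δ (ε / 2) := lt_min hδ (by positivity)
  have hNpos : (0 : ℝ) < N := lt_of_le_of_lt (by positivity) hN
  have hnN : ((m + 1 : ℕ) : ℝ) / N < min δ (ε / 2) := by
    rw [div_lt_iff₀ hmin] at hN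
    rw [div_lt_iff₀ hNpos]
    linarith
  have hnN1 := lt_of_lt_of_le hnN (min_le_left _ _)
  have hnN2 := lt_of_lt_of_le hnN (min_le_right _ _)
  let T := {a : Fin (m + 1) → Fin (N + 1) // ∑ i, (a i : ℕ) = N}
  have mkT : ∀ y : Fin (m + 1) → ℕ, ∑ i, y i = N → ∃ a : T, ∀ i, (a.1 i : ℕ) = y i := by
    intro y hy
    have hle : ∀ i, y i < N + 1 := by
      intro i
      have := Finset.single_le_sum (f := y) (fun j _ => Nat.zero_le _) (Finset.mem_univ i)
      omega
    exact ⟨⟨fun i => ⟨y i, hle i⟩, hy⟩, fun i => rfl⟩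
  haveI : Nonempty T := by
    obtain ⟨a, -⟩ := mkT (fun i => if i = 0 then N else 0) (by simp)
    exact ⟨a⟩
  let p : T → Fin (m + 1) → ℝ := fun a i => ((a.1 i : ℕ) : ℝ) / N
  have hp : ∀ a, p a ∈ stdSimplex ℝ (Fin (m + 1)) := by
    intro a
    refine ⟨fun i => by positivity, ?_⟩
    simp only [p]
    rw [← Finset.sum_div, ← Nat.cast_sum, a.2, div_self hNpos.ne']
  let e := Fintype.equivFin T
  let r : Fin (m + 1) → T → ℕ := fun i a => Fintype.card T * (a.1 i : ℕ) + (e a : ℕ)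
  have hr : ∀ i, Function.Injective (r i) := by
    intro i a b hab
    have := congrArg (· % Fintype.card T) hab
    simp only [r, Nat.mul_add_mod, Nat.mod_eq_of_lt (e a).2, Nat.mod_eq_of_lt (e b).2] at this
    exact e.injective (Fin.ext this)
  have hrlt : ∀ i a b, (a.1 i : ℕ) < (b.1 i : ℕ) → r i a < r i b := by
    intro i a b hab
    have h1 : Fintype.card T * ((a.1 i : ℕ) + 1) ≤ Fintype.card T * (b.1 i : ℕ) :=
      Nat.mul_le_mul_left _ hab
    have h2 := (e a).2
    simp only [r]
    rw [Nat.mul_add, Nat.mul_one] at h1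
    omega
  have hc : ∀ a, ∃ i, p a i ≤ f (p a) i := by
    intro a
    by_contra hno
    push Not at hno
    have h1 := (hp a).2
    have h2 := (hmaps _ (hp a)).2
    have : ∑ i, f (p a) i < ∑ i, p a i :=
      Finset.sum_lt_sum_of_nonempty Finset.univ_nonempty (fun i _ => hno i)
    linarith
  choose c hc using hc
  obtain ⟨σ, C, hdom, him⟩ := scarf_lemma r hr c
  obtain ⟨i1, hi1, -⟩ := hdom (Classical.arbitrary T)
  have hσ : σ.Nonempty := by
    rw [← him] at hi1
    obtain ⟨x, hx, -⟩ := Finset.mem_image.1 hi1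
    exact ⟨x, hx⟩
  have hmn : ∀ i, ∃ z ∈ σ, ∀ x ∈ σ, (z.1 i : ℕ) ≤ (x.1 i : ℕ) :=
    fun i => Finset.exists_min_image σ (fun x => (x.1 i : ℕ)) hσ
  choose z hzσ hzle using hmn
  have hsum : N < ∑ i ∈ C, (((z i).1 i : ℕ) + 1) := by
    by_contra hle
    push Not at hle
    obtain ⟨y, hy⟩ := mkT (fun i => (if i ∈ C then (((z i).1 i : ℕ) + 1) else 0) +
      (if i = i1 then N - ∑ i ∈ C, (((z i).1 i : ℕ) + 1) else 0)) (by
        rw [Finset.sum_add_distrib, Finset.sum_ite_mem, Finset.univ_inter, Finset.sum_ite_eq']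
        simp only [Finset.mem_univ, if_true]
        omega)
    obtain ⟨i, hi, hix⟩ := hdom y
    have h1 := hix _ (hzσ i)
    have h2 : ((z i).1 i : ℕ) < (y.1 i : ℕ) := by
      rw [hy i, if_pos hi]; omega
    have := hrlt i _ _ h2
    omega
  let M : Fin (m + 1) → ℕ := fun i => if i ∈ C then ((z i).1 i : ℕ) else 0
  have hMle : ∀ x ∈ σ, ∀ i, M i ≤ (x.1 i : ℕ) := by
    intro x hx i
    simp only [M]
    split_ifs
    · exact hzle i x hx
    · exact Nat.zero_le _
  have hMsum : N < ∑ i, M i + (m + 1) := by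
    have h1 : ∑ i, M i = ∑ i ∈ C, ((z i).1 i : ℕ) := by
      simp only [M]
      rw [Finset.sum_ite_mem, Finset.univ_inter]
    rw [Finset.sum_add_distrib, ← h1] at hsum
    have h2 : C.card ≤ m + 1 := by
      simpa using Finset.card_le_univ C
    simp only [Finset.sum_const, smul_eq_mul, mul_one] at hsum
    omega
  have hxM : ∀ x ∈ σ, ∀ i, (x.1 i : ℕ) < M i + (m + 1) := by
    intro x hx i
    have h1 := x.2
    rw [← Finset.add_sum_erase _ _ (Finset.mem_univ i)] at h1 hMsum
    have h2 : ∑ j ∈ Finset.univ.erase i, M j ≤ ∑ j ∈ Finset.univ.erase i, (x.1 j : ℕ) :=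
      Finset.sum_le_sum (fun j _ => hMle x hx j)
    omega
  have hclose : ∀ x ∈ σ, ∀ x' ∈ σ, ∀ i, p x i ≤ p x' i + ((m + 1 : ℕ) : ℝ) / N := by
    intro x hx x' hx' i
    have h1 := hxM x hx i
    have h2 := hMle x' hx' i
    have h3 : (x.1 i : ℕ) ≤ (x'.1 i : ℕ) + (m + 1) := by omega
    have h4 : ((x.1 i : ℕ) : ℝ) ≤ ((x'.1 i : ℕ) : ℝ) + ((m + 1 : ℕ) : ℝ) := by exact_mod_cast h3
    simp only [p]
    rw [← add_div]
    exact div_le_div_of_nonneg_right h4 hNpos.le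
  obtain ⟨x0, hx0⟩ := hσ
  refine ⟨p x0, hp x0, fun i => ?_⟩
  by_cases hi : i ∈ C
  · rw [← him] at hi
    obtain ⟨x, hx, hxi⟩ := Finset.mem_image.1 hi
    have h1 : p x i ≤ f (p x) i := hxi ▸ hc x
    have h2 : dist (p x) (p x0) < δ := by
      refine lt_of_le_of_lt ((dist_pi_le_iff (by positivity)).2 fun j => ?_) hnN1
      rw [Real.dist_eq, abs_le]
      have := hclose x hx x0 hx0 j
      have := hclose x0 hx0 x hx j
      constructor <;> linarith
    have h3 := huc _ (hp x) _ (hp x0) h2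
    have h4 := (dist_le_pi_dist (f (p x)) (f (p x0)) i).trans_lt h3
    rw [Real.dist_eq, abs_lt] at h4
    have := hclose x0 hx0 x hx i
    linarith [h4.2]
  · have h1 := (hmaps _ (hp x0)).1 i
    have h2 := hxM x0 hx0 i
    simp only [M, if_neg hi] at h2
    have h3 : ((x0.1 i : ℕ) : ℝ) ≤ ((m + 1 : ℕ) : ℝ) := by exact_mod_cast (by omega)
    have h4 : p x0 i ≤ ((m + 1 : ℕ) : ℝ) / N := div_le_div_of_nonneg_right h3 hNpos.le
    linarith

theorem brouwer_simplex_s5 (m : ℕ) (f : (Fin (m + 1) → ℝ) → (Fin (m + 1) → ℝ))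
    (hf : ContinuousOn f (stdSimplex ℝ (Fin (m + 1))))
    (hmaps : ∀ x ∈ stdSimplex ℝ (Fin (m + 1)), f x ∈ stdSimplex ℝ (Fin (m + 1))) :
    ∃ x ∈ stdSimplex ℝ (Fin (m + 1)), f x = x := by
  classical
  let g : (Fin (m + 1) → ℝ) → ℝ := fun x => ∑ i, max 0 (x i - f x i)
  have hg : ContinuousOn g (stdSimplex ℝ (Fin (m + 1))) := by
    apply continuousOn_finsetSum
    intro i _
    apply ContinuousOn.sup continuousOn_const
    exact (continuous_apply i).continuousOn.sub ((continuous_apply i).comp_continuousOn hf)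
  obtain ⟨x, hx, hmin⟩ := (isCompact_stdSimplex ℝ (Fin (m + 1))).exists_isMinOn
    ⟨_, single_mem_stdSimplex ℝ (0 : Fin (m + 1))⟩ hg
  have hg0 : g x ≤ 0 := by
    by_contra hpos
    push Not at hpos
    obtain ⟨y, hy, hyi⟩ := brouwer_approx m f hf hmaps (g x / (2 * ((m + 1 : ℕ) : ℝ)))
      (by positivity)
    have h1 : g x ≤ g y := hmin hy
    have h2 : g y ≤ ∑ _i : Fin (m + 1), g x / (2 * ((m + 1 : ℕ) : ℝ)) := by
      apply Finset.sum_le_sum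
      intro i _
      apply max_le (by positivity)
      linarith [hyi i]
    rw [Finset.sum_const, Finset.card_univ, Fintype.card_fin, nsmul_eq_mul] at h2
    have h3 : ((m + 1 : ℕ) : ℝ) * (g x / (2 * ((m + 1 : ℕ) : ℝ))) = g x / 2 := by
      field_simp
    rw [h3] at h2
    linarith
  have hle : ∀ i ∈ Finset.univ, x i ≤ f x i := by
    intro i _
    have h1 : max 0 (x i - f x i) ≤ g x :=
      Finset.single_le_sum (f := fun i => max 0 (x i - f x i)) (fun j _ => le_max_left _ _)
        (Finset.mem_univ i)
    have h2 := le_max_right 0 (x i - f x i)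
    linarith
  refine ⟨x, hx, ?_⟩
  have h := (Finset.sum_eq_sum_iff_of_le hle).1 (hx.2.trans (hmaps x hx).2.symm)
  funext i
  exact (h i (Finset.mem_univ i)).symm

/-- Two-player symmetric existence: if a continuous incentive satisfies
`φ_1(x) = φ_2(x)` whenever `x_1 = x_2`, there is a symmetric incentive equilibrium. -/
theorem exists_symmetric_incentive_equilibrium_two_player (m : ℕ)
    (φ : (∀ i : Fin 2, Fin ((fun _ : Fin 2 => m) i + 1) → ℝ) →
      ∀ i : Fin 2, Fin ((fun _ : Fin 2 => m) i + 1) → ℝ)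
    (hφ : IsInc φ) (hcont : Continuous φ)
    (hpos : ∀ x ∈ Δset (fun _ : Fin 2 => m), ∀ i α, 0 ≤ x i α + φ x i α)
    (hsym : ∀ x ∈ Δset (fun _ : Fin 2 => m), x 0 = x 1 → φ x 0 = φ x 1) :
    ∃ x ∈ Δset (fun _ : Fin 2 => m), x 0 = x 1 ∧ IncEq φ x := by
  classical
  have hmem : ∀ x ∈ stdSimplex ℝ (Fin (m + 1)), (fun _ : Fin 2 => x) ∈ Δset (fun _ : Fin 2 => m) :=
    fun x hx => ⟨fun _ α => hx.1 α, fun _ => hx.2⟩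
  let ψ : (Fin (m + 1) → ℝ) → (Fin (m + 1) → ℝ) := fun x => φ (fun _ => x) 0
  have hψ : Continuous ψ :=
    (continuous_apply (0 : Fin 2)).comp (hcont.comp (continuous_pi fun _ => continuous_id))
  have hψi : ∀ i, Continuous fun x => ψ x i := fun i => (continuous_apply i).comp hψ
  have hne : ∀ x, 1 + ∑ β, ψ x β ≠ 0 := by
    intro x h
    apply hφ.2 (fun _ => x) 0
    have : ∑ β, ψ x β = -1 := by linarith
    exact this
  have hnn : ∀ x ∈ stdSimplex ℝ (Fin (m + 1)), ∀ α, 0 ≤ x α + ψ x α :=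
    fun x hx α => hpos _ (hmem x hx) 0 α
  have hsum : ∀ x ∈ stdSimplex ℝ (Fin (m + 1)), ∑ α, (x α + ψ x α) = 1 + ∑ β, ψ x β := by
    intro x hx
    rw [Finset.sum_add_distrib, hx.2]
  have hge : ∀ x ∈ stdSimplex ℝ (Fin (m + 1)), 0 ≤ 1 + ∑ β, ψ x β := by
    intro x hx
    rw [← hsum x hx]
    exact Finset.sum_nonneg fun α _ => hnn x hx α
  obtain ⟨x, hx, hfix⟩ := brouwer_simplex_s5 m
    (fun x α => (x α + ψ x α) / (1 + ∑ β, ψ x β))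
    (by
      apply Continuous.continuousOn
      apply continuous_pi
      intro α
      exact ((continuous_apply α).add (hψi α)).div
        (continuous_const.add (continuous_finsetSum _ fun β _ => hψi β)) hne)
    (by
      intro x hx
      refine ⟨fun α => div_nonneg (hnn x hx α) (hge x hx), ?_⟩
      rw [← Finset.sum_div, hsum x hx, div_self (hne x)])
  have hψeq : ∀ α, ψ x α = x α * ∑ β, ψ x β := by
    intro α
    have h := congrFun hfix α
    change (x α + ψ x α) / (1 + ∑ β, ψ x β) = x α at h
    rw [div_eq_iff (hne x)] at h
    linarith
  refine ⟨fun _ => x, hmem x hx, rfl, ?_⟩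
  have hs := hsym _ (hmem x hx) rfl
  intro i
  fin_cases i
  · exact hψeq
  · intro α
    change φ (fun _ => x) 1 α = x α * ∑ β, φ (fun _ => x) 1 β
    rw [← hs]
    exact hψeq α
end
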